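/- Suppose m ≥ 1 is an integer divisible by l(l−1). Then the largest degree of a minimal generator of I^{(m)} equals lm: v_{lm}(I^{(m)}) = 1 and v_d(I^{(m)}) = 0 for every degree d > lm. Consequently, along integers m divisible by l(l−1), the ratio (largest degree of a minimal generator of I^{(m)})/m converges to l as m → ∞. (This is the y-intercept of the limiting shape of the symbolic generic initial system of I.) -/

import Mathlib

open MvPolynomial Filter

/-- The degree-`d` homogeneous component of a homogeneous ideal `J ⊆ K[x,y,z]`,
as a `K`-vector subspace. -/
noncomputable def degComp {K : Type*} [Field K] (J : Ideal (MvPolynomial (Fin 3) K)) (d : ℕ) :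
    Submodule K (MvPolynomial (Fin 3) K) :=
  Submodule.restrictScalars K J ⊓ homogeneousSubmodule (Fin 3) K d

/-- `dim_K J_d`. -/
noncomputable def hdim {K : Type*} [Field K] (J : Ideal (MvPolynomial (Fin 3) K)) (d : ℕ) : ℕ :=
  Module.finrank K (degComp J d)

/-- The subspace `R_1 · J_{d-1}` of products of linear forms with degree-`(d-1)` elements. -/
noncomputable def oneGen {K : Type*} [Field K] (J : Ideal (MvPolynomial (Fin 3) K)) (d : ℕ) :
    Submodule K (MvPolynomial (Fin 3) K) :=
  Submodule.span K
    {x | ∃ f ∈ homogeneousSubmodule (Fin 3) K 1, ∃ g ∈ degComp J (d - 1), x = f * g}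

/-- `v_d(J) = dim_K J_d / (R_1 · J_{d-1})`, the number of minimal generators of `J`
in degree `d`. -/
noncomputable def vnum {K : Type*} [Field K] (J : Ideal (MvPolynomial (Fin 3) K)) (d : ℕ) : ℕ :=
  Module.finrank K
    (↥(degComp J d) ⧸ Submodule.comap (degComp J d).subtype (oneGen J d))

/-!
Choose coordinates in which `L` is the line `x = 0` and the last point is `(1 : 0 : 0)`, and let
`V ∈ K[y, z]` be the product of the `l` linear forms vanishing at the points on `L`. Then
`I^{(m)} = (x, V)^m ∩ (y, z)^m`, and `∑ x^k g_k(y, z)` lies in it if and only if `V^{m - k}`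
divides `g_k` and `g_k ∈ (y, z)^m` for every `k`.

Take a nonzero term `x^k g_k` in `I^{(m)}` of degree `d ≥ l m`. If `k > m`, a factor `x` can be
split off. If `k ≤ m`, then `g_k = V^{m - k} h` with `deg h = d - l m + (l - 1) k`, and a linear
factor can be split off `h` unless `deg h = 0`; since `l > 2`, the cofactor stays in `(y, z)^m`.
Now `deg h = 0` happens only for `k = 0` and `d = l m`, and there `V^m` is a new generator: a form
of degree less than `l m` in `I^{(m)}` has `g_0 = 0`, because `V^m` divides `g_0`.
-/

section Homogeneous

variable {σ R : Type*}

lemma homogeneousComponent_mul_of_isHomogeneous [CommSemiring R] {p : MvPolynomial σ R} {N : ℕ}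
    (hp : p.IsHomogeneous N) (q : MvPolynomial σ R) (j : ℕ) :
    homogeneousComponent (N + j) (p * q) = p * homogeneousComponent j q := by
  let := gradedAlgebra (σ := σ) (R := R)
  simpa only [DirectSum.decompose, Equiv.coe_fn_mk, decomposition.decompose'_apply] using
    DirectSum.coe_decompose_mul_add_of_left_mem (homogeneousSubmodule σ R) (j := j) (b := q) hp

lemma exists_isHomogeneous_of_mul [CommRing R] [IsDomain R] {p q : MvPolynomial σ R} {N n : ℕ}
    (hp : p.IsHomogeneous N) (hpq : (p * q).IsHomogeneous n) (h0 : p * q ≠ 0) :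
    ∃ e, N + e = n ∧ q.IsHomogeneous e := by
  have degree_eq : ∀ j, homogeneousComponent j q ≠ 0 → N + j = n := by
    intro j hj
    have hne : homogeneousComponent (N + j) (p * q) ≠ 0 := by
      rw [homogeneousComponent_mul_of_isHomogeneous hp]
      exact mul_ne_zero (left_ne_zero_of_mul h0) hj
    by_contra hjn
    exact hne (by rw [homogeneousComponent_of_mem hpq, if_neg hjn])
  obtain ⟨e, -, he⟩ : ∃ e ∈ Finset.range (q.totalDegree + 1), homogeneousComponent e q ≠ 0 :=
    Finset.exists_ne_zero_of_sum_ne_zero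
      ((sum_homogeneousComponent q).symm ▸ right_ne_zero_of_mul h0)
  refine ⟨e, degree_eq e he, ?_⟩
  rw [← sum_homogeneousComponent q]
  refine IsHomogeneous.sum _ _ _ fun j _ => ?_
  by_cases hj : homogeneousComponent j q = 0
  · rw [hj]
    exact isHomogeneous_zero _ _ _
  · obtain rfl : j = e := by have := degree_eq j hj; have := degree_eq e he; omega
    exact homogeneousComponent_isHomogeneous j q

lemma exists_eq_C_mul_of_dvd_of_isHomogeneous [CommRing R] [IsDomain R] {p q : MvPolynomial σ R}
    {n : ℕ} (hp : p.IsHomogeneous n) (hq : q.IsHomogeneous n) (h : p ∣ q) :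
    ∃ c : R, q = C c * p := by
  obtain ⟨r, rfl⟩ := h
  by_cases h0 : p * r = 0
  · exact ⟨0, by rw [h0, C_0, zero_mul]⟩
  · obtain ⟨e, he, hr⟩ := exists_isHomogeneous_of_mul hp hq h0
    obtain rfl : e = 0 := by omega
    rw [← totalDegree_zero_iff_isHomogeneous, totalDegree_eq_zero_iff_eq_C] at hr
    exact ⟨coeff 0 r, by rw [← hr, mul_comm]⟩

lemma homogeneousSubmodule_succ [CommSemiring R] (n : ℕ) :
    homogeneousSubmodule σ R (n + 1) = homogeneousSubmodule σ R 1 * homogeneousSubmodule σ R n := by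
  rw [← homogeneousSubmodule_one_pow, pow_succ', homogeneousSubmodule_one_pow]

lemma mem_pow_idealOfVars_of_isHomogeneous [CommSemiring R] {p : MvPolynomial σ R} {m n : ℕ}
    (hp : p.IsHomogeneous n) (hmn : m ≤ n) : p ∈ idealOfVars σ R ^ m := by
  rw [mem_pow_idealOfVars_iff]
  intro s hs
  rwa [not_imp_comm.1 hp.coeff_eq_zero (mem_support_iff.1 hs)]

lemma le_of_mem_pow_idealOfVars_of_isHomogeneous [CommSemiring R] {p : MvPolynomial σ R} {m n : ℕ}
    (hp : p.IsHomogeneous n) (h0 : p ≠ 0) (h : p ∈ idealOfVars σ R ^ m) : m ≤ n := by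
  obtain ⟨s, hs⟩ := support_nonempty.2 h0
  exact not_imp_comm.1 hp.coeff_eq_zero (mem_support_iff.1 hs) ▸
    (mem_pow_idealOfVars_iff m p).1 h s hs

lemma aeval_mul_of_isHomogeneous {S : Type*} [CommSemiring R] [CommSemiring S] [Algebra R S]
    {p : MvPolynomial σ R} {n : ℕ} (hp : p.IsHomogeneous n) (c : S) (f : σ → S) :
    aeval (fun i => c * f i) p = c ^ n * aeval f p := by
  rw [aeval_def, aeval_def, eval₂_eq, eval₂_eq, Finset.mul_sum]
  refine Finset.sum_congr rfl fun s hs => ?_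
  have degree_eq : ∑ i ∈ s.support, s i = n := (hp.degree_eq_sum_deg_support hs).symm
  simp_rw [mul_pow, Finset.prod_mul_distrib, Finset.prod_pow_eq_pow_sum, degree_eq]
  ring

end Homogeneous

section Slices

variable {R : Type*} [CommRing R] {n : ℕ}

lemma finSuccEquiv_rename_succ (p : MvPolynomial (Fin n) R) :
    finSuccEquiv R n (rename Fin.succ p) = Polynomial.C p := by
  have : (finSuccEquiv R n).toAlgHom.comp (rename Fin.succ) = Polynomial.CAlgHom := by
    ext i : 1
    simp [finSuccEquiv_X_succ]
  simpa using DFunLike.congr_fun this p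

lemma coeff_finSuccEquiv_X_zero_pow_mul_rename (k j : ℕ) (p : MvPolynomial (Fin n) R) :
    (finSuccEquiv R n (X 0 ^ k * rename Fin.succ p)).coeff j = if j = k then p else 0 := by
  rw [map_mul, map_pow, finSuccEquiv_X_zero, finSuccEquiv_rename_succ, mul_comm,
    Polynomial.coeff_C_mul_X_pow]

lemma sum_X_zero_pow_mul_rename_coeff (F : MvPolynomial (Fin (n + 1)) R) :
    ∑ k ∈ Finset.range ((finSuccEquiv R n F).natDegree + 1),
      X 0 ^ k * rename Fin.succ ((finSuccEquiv R n F).coeff k) = F := by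
  apply (finSuccEquiv R n).injective
  conv_rhs => rw [Polynomial.as_sum_range_C_mul_X_pow (finSuccEquiv R n F)]
  simp_rw [map_sum, map_mul, map_pow, finSuccEquiv_X_zero, finSuccEquiv_rename_succ, mul_comm]

lemma mem_map_rename_succ_iff (I : Ideal (MvPolynomial (Fin n) R))
    (F : MvPolynomial (Fin (n + 1)) R) :
    F ∈ I.map (rename Fin.succ) ↔ ∀ k, (finSuccEquiv R n F).coeff k ∈ I := by
  refine ⟨fun hF => Ideal.mem_map_C_iff.1 ?_, fun hF => ?_⟩
  · have hle : I.map (rename Fin.succ) ≤ (I.map Polynomial.C).comap (finSuccEquiv R n) :=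
      Ideal.map_le_iff_le_comap.2 fun g hg => by
        rw [Ideal.mem_comap, Ideal.mem_comap, finSuccEquiv_rename_succ]
        exact Ideal.mem_map_of_mem _ hg
    exact hle hF
  · rw [← sum_X_zero_pow_mul_rename_coeff F]
    exact Ideal.sum_mem _ fun k _ => Ideal.mul_mem_left _ _ (Ideal.mem_map_of_mem _ (hF k))

end Slices

section PolynomialIdeal

variable {A : Type*} [CommRing A] (I : Ideal A)

lemma coeff_mul_mem_pow_sub {a b : ℕ} {F G : Polynomial A} (hF : ∀ k, F.coeff k ∈ I ^ (a - k))
    (hG : ∀ k, G.coeff k ∈ I ^ (b - k)) (k : ℕ) : (F * G).coeff k ∈ I ^ (a + b - k) := by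
  rw [Polynomial.coeff_mul]
  refine Ideal.sum_mem _ fun x hx => ?_
  have hx : x.1 + x.2 = k := by simpa using hx
  refine Ideal.pow_le_pow_right (show a + b - k ≤ a - x.1 + (b - x.2) by omega) ?_
  rw [pow_add]
  exact Ideal.mul_mem_mul (hF x.1) (hG x.2)

lemma mem_span_X_sup_map_C_pow_iff (m : ℕ) (F : Polynomial A) :
    F ∈ (Ideal.span {Polynomial.X} ⊔ I.map Polynomial.C) ^ m ↔ ∀ k, F.coeff k ∈ I ^ (m - k) := by
  constructor
  · intro hF
    induction m generalizing F with
    | zero => simp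
    | succ m ih =>
      rw [pow_succ'] at hF
      refine Submodule.mul_induction_on hF (fun G hG H hH => ?_) fun G H hG hH k => ?_
      · rw [add_comm m]
        refine coeff_mul_mem_pow_sub I (fun k => ?_) (ih H hH)
        obtain ⟨G₁, h₁, G₂, h₂, rfl⟩ := Submodule.mem_sup.1 hG
        obtain _ | k := k
        · obtain ⟨G₁, rfl⟩ := Ideal.mem_span_singleton.1 h₁
          simpa using Ideal.mem_map_C_iff.1 h₂ 0
        · simp
      · rw [Polynomial.coeff_add]
        exact add_mem (hG k) (hH k)
  · intro hF
    rw [Polynomial.as_sum_range_C_mul_X_pow F]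
    refine Ideal.sum_mem _ fun k _ => ?_
    refine Ideal.pow_le_pow_right (show m ≤ m - k + k by omega) ?_
    rw [pow_add]
    refine Ideal.mul_mem_mul ?_ (Ideal.pow_mem_pow ?_ k)
    · refine Ideal.pow_right_mono le_sup_right _ ?_
      rw [← Ideal.map_pow]
      exact Ideal.mem_map_of_mem _ (hF k)
    · exact Ideal.mem_sup_left (Ideal.mem_span_singleton_self _)

end PolynomialIdeal

section LinePointIdeal

variable {R : Type*} [CommRing R] {n : ℕ}

/-- The `m`-th powers of the ideal `(x, V)` of a subscheme `V = 0` of the hyperplane `x = 0` and of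
the ideal of the point at which all variables other than `x` vanish, intersected. The variable `x`
is `X 0`, and `V` is a polynomial in the other variables. -/
noncomputable def linePointIdeal (V : MvPolynomial (Fin n) R) (m : ℕ) :
    Ideal (MvPolynomial (Fin (n + 1)) R) :=
  Ideal.span {X 0, rename Fin.succ V} ^ m ⊓ (idealOfVars (Fin n) R).map (rename Fin.succ) ^ m

lemma mem_span_X_zero_rename_pow_iff (V : MvPolynomial (Fin n) R) (m : ℕ)
    (F : MvPolynomial (Fin (n + 1)) R) :
    F ∈ Ideal.span {X 0, rename Fin.succ V} ^ m ↔
      ∀ k, V ^ (m - k) ∣ (finSuccEquiv R n F).coeff k := by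
  have map_span : (Ideal.span {X 0, rename Fin.succ V}).map (finSuccEquiv R n) =
      Ideal.span {Polynomial.X} ⊔ (Ideal.span {V}).map Polynomial.C := by
    rw [Ideal.map_span, Set.image_pair, finSuccEquiv_X_zero, finSuccEquiv_rename_succ,
      Ideal.map_span, Set.image_singleton, Ideal.span_insert]
  rw [← Ideal.comap_map_of_bijective (finSuccEquiv R n) (finSuccEquiv R n).bijective
    (I := Ideal.span _ ^ m), Ideal.mem_comap, Ideal.map_pow, map_span, mem_span_X_sup_map_C_pow_iff]
  simp_rw [Ideal.span_singleton_pow, Ideal.mem_span_singleton]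

lemma mem_linePointIdeal_iff (V : MvPolynomial (Fin n) R) (m : ℕ)
    (F : MvPolynomial (Fin (n + 1)) R) :
    F ∈ linePointIdeal V m ↔ ∀ k, V ^ (m - k) ∣ (finSuccEquiv R n F).coeff k ∧
      (finSuccEquiv R n F).coeff k ∈ idealOfVars (Fin n) R ^ m := by
  rw [linePointIdeal, Ideal.mem_inf, mem_span_X_zero_rename_pow_iff, ← Ideal.map_pow,
    mem_map_rename_succ_iff, forall_and]

end LinePointIdeal

section NumberOfGenerators

lemma finrank_quotient_comap_subtype_map {R M N : Type*} [Ring R] [AddCommGroup M] [Module R M]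
    [AddCommGroup N] [Module R N] (e : M ≃ₗ[R] N) (p q : Submodule R M) :
    Module.finrank R (p.map e.toLinearMap ⧸
      (q.map e.toLinearMap).comap (p.map e.toLinearMap).subtype) =
      Module.finrank R (p ⧸ q.comap p.subtype) := by
  refine (Submodule.Quotient.equiv _ _ (e.submoduleMap p) ?_).finrank_eq.symm
  ext ⟨y, hy⟩
  obtain ⟨x, hx, rfl⟩ := hy
  simp

variable {K : Type*} [Field K] {J : Ideal (MvPolynomial (Fin 3) K)} {d : ℕ}

lemma mem_degComp {F : MvPolynomial (Fin 3) K} : F ∈ degComp J d ↔ F ∈ J ∧ F.IsHomogeneous d :=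
  Iff.rfl

lemma oneGen_eq_mul (J : Ideal (MvPolynomial (Fin 3) K)) (d : ℕ) :
    oneGen J d = homogeneousSubmodule (Fin 3) K 1 * degComp J (d - 1) := by
  rw [Submodule.mul_eq_span_mul_set, oneGen]
  congr 1
  ext F
  simp only [Set.mem_ofPred_eq, Set.mem_mul, SetLike.mem_coe, eq_comm]

lemma mul_mem_oneGen {f g : MvPolynomial (Fin 3) K} (hf : f.IsHomogeneous 1)
    (hg : g ∈ degComp J d) : f * g ∈ oneGen J (d + 1) :=
  Submodule.subset_span ⟨f, hf, g, hg, rfl⟩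

lemma vnum_eq_zero_of_le (h : degComp J d ≤ oneGen J d) : vnum J d = 0 := by
  have := Submodule.Quotient.subsingleton_iff.2 (Submodule.comap_subtype_eq_top.2 h)
  exact Module.finrank_zero_of_subsingleton

lemma vnum_eq_one {U : MvPolynomial (Fin 3) K} (hU : U ∈ degComp J d) (hU' : U ∉ oneGen J d)
    (h : ∀ F ∈ degComp J d, ∃ c : K, F - c • U ∈ oneGen J d) : vnum J d = 1 := by
  refine _root_.finrank_eq_one (Submodule.Quotient.mk ⟨U, hU⟩) ?_ fun w => ?_
  · rwa [Ne, Submodule.Quotient.mk_eq_zero]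
  · obtain ⟨⟨F, hF⟩, rfl⟩ := Submodule.Quotient.mk_surjective _ w
    obtain ⟨c, hc⟩ := h F hF
    refine ⟨c, ?_⟩
    rw [← Submodule.Quotient.mk_smul, eq_comm, Submodule.Quotient.eq]
    exact hc

lemma vnum_map (e : MvPolynomial (Fin 3) K ≃ₐ[K] MvPolynomial (Fin 3) K)
    (he : ∀ n F, (e F).IsHomogeneous n ↔ F.IsHomogeneous n)
    (J : Ideal (MvPolynomial (Fin 3) K)) (d : ℕ) : vnum (J.map e) d = vnum J d := by
  have map_homogeneous (n : ℕ) : (homogeneousSubmodule (Fin 3) K n).map e.toLinearMap =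
      homogeneousSubmodule (Fin 3) K n := by
    ext F
    obtain ⟨F, rfl⟩ := e.surjective F
    exact e.injective.mem_set_image.trans (he n F).symm
  have map_restrictScalars : (J.restrictScalars K).map e.toLinearMap =
      (J.map e).restrictScalars K := by
    ext F
    exact (Ideal.mem_map_of_equiv e F).symm
  have map_degComp (n : ℕ) : (degComp J n).map e.toLinearMap = degComp (J.map e) n := by
    rw [degComp, Submodule.map_inf _ e.injective, map_homogeneous, map_restrictScalars, degComp]
  have map_oneGen : (oneGen J d).map e.toLinearMap = oneGen (J.map e) d := by
    have map_mul := Submodule.map_mul (homogeneousSubmodule (Fin 3) K 1) (degComp J (d - 1))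
      e.toAlgHom
    rw [oneGen_eq_mul, oneGen_eq_mul, ← map_degComp]
    exact map_mul.trans (congrArg (· * _) (map_homogeneous 1))
  rw [vnum, vnum, ← map_degComp, ← map_oneGen]
  exact finrank_quotient_comap_subtype_map e.toLinearEquiv _ _

end NumberOfGenerators

section DegreesOfGenerators

variable {K : Type*} [Field K] {V : MvPolynomial (Fin 2) K} {l m d k n : ℕ}

lemma X_zero_pow_mul_rename_mem_degComp {g : MvPolynomial (Fin 2) K} (hg : g.IsHomogeneous n)
    (hVg : V ^ (m - k) ∣ g) (hmn : m ≤ n) :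
    X 0 ^ k * rename Fin.succ g ∈ degComp (linePointIdeal V m) (k + n) := by
  refine ⟨(mem_linePointIdeal_iff V m _).2 fun j => ?_, ?_⟩
  · rw [coeff_finSuccEquiv_X_zero_pow_mul_rename]
    split_ifs with hj
    · exact ⟨hj ▸ hVg, mem_pow_idealOfVars_of_isHomogeneous hg hmn⟩
    · exact ⟨dvd_zero _, zero_mem _⟩
  · exact (isHomogeneous_X_pow 0 k).mul hg.rename_isHomogeneous

lemma exists_isHomogeneous_coeff_of_mem_degComp {F : MvPolynomial (Fin 3) K}
    (hF : F ∈ degComp (linePointIdeal V m) d) (h0 : (finSuccEquiv K 2 F).coeff k ≠ 0) :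
    ∃ n, k + n = d ∧ m ≤ n ∧ ((finSuccEquiv K 2 F).coeff k).IsHomogeneous n ∧
      V ^ (m - k) ∣ (finSuccEquiv K 2 F).coeff k := by
  obtain ⟨hFJ, hFd⟩ := mem_degComp.1 hF
  obtain ⟨hdvd, hpow⟩ := (mem_linePointIdeal_iff V m F).1 hFJ k
  have hkd : k ≤ d := by
    have := totalDegree_coeff_finSuccEquiv_add_le F k h0
    have := hFd.totalDegree_le
    omega
  have hhom := hFd.finSuccEquiv_coeff_isHomogeneous k (d - k) (by omega)
  exact ⟨d - k, by omega, le_of_mem_pow_idealOfVars_of_isHomogeneous hhom h0 hpow, hhom, hdvd⟩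

lemma X_zero_pow_mul_rename_pow_mul_mem_oneGen {h : MvPolynomial (Fin 2) K} {e : ℕ}
    (hV : V.IsHomogeneous l) (hh : h.IsHomogeneous (e + 1)) (hm : m ≤ l * (m - k) + e) :
    X 0 ^ k * rename Fin.succ (V ^ (m - k) * h) ∈
      oneGen (linePointIdeal V m) (k + (l * (m - k) + e) + 1) := by
  rw [← mem_homogeneousSubmodule, homogeneousSubmodule_succ] at hh
  induction hh using Submodule.mul_induction_on' with
  | mem_mul_mem a ha b hb =>
    have hab : X 0 ^ k * rename Fin.succ (V ^ (m - k) * (a * b)) =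
        rename Fin.succ a * (X 0 ^ k * rename Fin.succ (V ^ (m - k) * b)) := by
      simp only [map_mul]
      ring
    rw [hab]
    exact mul_mem_oneGen (IsHomogeneous.rename_isHomogeneous ha)
      (X_zero_pow_mul_rename_mem_degComp ((hV.pow _).mul hb) (dvd_mul_right _ _) hm)
  | add a _ b _ iha ihb =>
    rw [mul_add, map_add, mul_add]
    exact add_mem iha ihb

lemma X_zero_pow_mul_rename_mem_oneGen (hV : V.IsHomogeneous l) (hl : 2 < l)
    {g : MvPolynomial (Fin 2) K} (hg : g.IsHomogeneous n) (hVg : V ^ (m - k) ∣ g) (hmn : m ≤ n)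
    (hd : l * m ≤ k + n) (hd' : 0 < k ∨ l * m < k + n) :
    X 0 ^ k * rename Fin.succ g ∈ oneGen (linePointIdeal V m) (k + n) := by
  by_cases hg0 : g = 0
  · rw [hg0, map_zero, mul_zero]
    exact zero_mem _
  rcases lt_or_ge m k with hmk | hkm
  · obtain ⟨k, rfl⟩ : ∃ k', k = k' + 1 := ⟨k - 1, by omega⟩
    have hVg' : V ^ (m - k) ∣ g := by
      rw [Nat.sub_eq_zero_of_le (by omega), pow_zero]
      exact one_dvd g
    rw [pow_succ', mul_assoc, add_right_comm]
    exact mul_mem_oneGen (isHomogeneous_X K 0) (X_zero_pow_mul_rename_mem_degComp hg hVg' hmn)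
  · obtain ⟨h, rfl⟩ := hVg
    obtain ⟨e, rfl, hh⟩ := exists_isHomogeneous_of_mul (hV.pow _) hg hg0
    obtain ⟨j, rfl⟩ := Nat.exists_eq_add_of_le hkm
    rw [Nat.add_sub_cancel_left] at *
    have hlk : 3 * k ≤ l * k := Nat.mul_le_mul_right k hl
    have hlj : 3 * j ≤ l * j := Nat.mul_le_mul_right j hl
    rw [mul_add] at hd hd'
    obtain ⟨e, rfl⟩ : ∃ e', e = e' + 1 := ⟨e - 1, by omega⟩
    have := X_zero_pow_mul_rename_pow_mul_mem_oneGen (m := k + j) (k := k) hV hh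
    simpa [Nat.add_sub_cancel_left, add_assoc] using this (by rw [Nat.add_sub_cancel_left]; omega)

lemma X_zero_pow_mul_rename_coeff_mem_oneGen (hV : V.IsHomogeneous l) (hl : 2 < l)
    {F : MvPolynomial (Fin 3) K} (hF : F ∈ degComp (linePointIdeal V m) d) (hd : l * m ≤ d)
    (hd' : 0 < k ∨ l * m < d) :
    X 0 ^ k * rename Fin.succ ((finSuccEquiv K 2 F).coeff k) ∈ oneGen (linePointIdeal V m) d := by
  by_cases h0 : (finSuccEquiv K 2 F).coeff k = 0
  · rw [h0, map_zero, mul_zero]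
    exact zero_mem _
  · obtain ⟨n, rfl, hmn, hhom, hdvd⟩ := exists_isHomogeneous_coeff_of_mem_degComp hF h0
    exact X_zero_pow_mul_rename_mem_oneGen hV hl hhom hdvd hmn hd hd'

theorem vnum_linePointIdeal_of_lt (hV : V.IsHomogeneous l) (hl : 2 < l) (hd : l * m < d) :
    vnum (linePointIdeal V m) d = 0 := by
  refine vnum_eq_zero_of_le fun F hF => ?_
  rw [← sum_X_zero_pow_mul_rename_coeff F]
  exact sum_mem fun k _ => X_zero_pow_mul_rename_coeff_mem_oneGen hV hl hF hd.le (.inr hd)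

lemma coeff_zero_eq_zero_of_mem_oneGen (hV : V.IsHomogeneous l) (hd0 : 0 < d) (hd : d ≤ l * m)
    {F : MvPolynomial (Fin 3) K} (hF : F ∈ oneGen (linePointIdeal V m) d) :
    (finSuccEquiv K 2 F).coeff 0 = 0 := by
  rw [oneGen_eq_mul] at hF
  induction hF using Submodule.mul_induction_on' with
  | mem_mul_mem f _ g hg =>
    rw [map_mul, Polynomial.mul_coeff_zero]
    by_contra hne
    obtain ⟨n, hn, -, hhom, h, hgh⟩ :=
      exists_isHomogeneous_coeff_of_mem_degComp hg (right_ne_zero_of_mul hne)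
    obtain ⟨e, he, -⟩ :=
      exists_isHomogeneous_of_mul (hV.pow (m - 0)) (hgh ▸ hhom) (hgh ▸ right_ne_zero_of_mul hne)
    rw [tsub_zero] at he
    omega
  | add f _ g _ hf hg => rw [map_add, Polynomial.coeff_add, hf, hg, add_zero]

lemma exists_coeff_zero_eq_C_mul_pow (hV : V.IsHomogeneous l) {F : MvPolynomial (Fin 3) K}
    (hF : F ∈ degComp (linePointIdeal V m) (l * m)) :
    ∃ c, (finSuccEquiv K 2 F).coeff 0 = C c * V ^ m := by
  by_cases h0 : (finSuccEquiv K 2 F).coeff 0 = 0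
  · exact ⟨0, by rw [h0, C_0, zero_mul]⟩
  · obtain ⟨n, hn, -, hhom, hdvd⟩ := exists_isHomogeneous_coeff_of_mem_degComp hF h0
    obtain rfl : n = l * m := by omega
    exact exists_eq_C_mul_of_dvd_of_isHomogeneous (hV.pow m) hhom hdvd

theorem vnum_linePointIdeal_mul (hV : V.IsHomogeneous l) (hV0 : V ≠ 0) (hl : 2 < l) (hm : 1 ≤ m) :
    vnum (linePointIdeal V m) (l * m) = 1 := by
  have coeff_pow : (finSuccEquiv K 2 (rename Fin.succ (V ^ m))).coeff 0 = V ^ m := by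
    rw [finSuccEquiv_rename_succ, Polynomial.coeff_C_zero]
  refine vnum_eq_one (U := rename Fin.succ (V ^ m)) ?_ (fun hU => ?_) fun F hF => ?_
  · simpa using X_zero_pow_mul_rename_mem_degComp (k := 0) (hV.pow m) dvd_rfl
      (Nat.le_mul_of_pos_left m (by omega))
  · have := coeff_zero_eq_zero_of_mem_oneGen hV (by positivity) le_rfl hU
    exact pow_ne_zero m hV0 (coeff_pow ▸ this)
  · obtain ⟨c, hc⟩ := exists_coeff_zero_eq_C_mul_pow hV hF
    refine ⟨c, ?_⟩
    have hsub : F - c • rename Fin.succ (V ^ m) =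
        ∑ k ∈ Finset.range (finSuccEquiv K 2 F).natDegree,
          X 0 ^ (k + 1) * rename Fin.succ ((finSuccEquiv K 2 F).coeff (k + 1)) := by
      conv_lhs => rw [← sum_X_zero_pow_mul_rename_coeff F, Finset.sum_range_succ']
      rw [hc, map_mul, rename_C, pow_zero, one_mul, smul_eq_C_mul, add_sub_cancel_right]
    rw [hsub]
    exact sum_mem fun k _ =>
      X_zero_pow_mul_rename_coeff_mem_oneGen hV hl hF le_rfl (.inl k.succ_pos)

end DegreesOfGenerators

section Points

variable {σ K : Type*} [Field K]

/-- The homogeneous ideal of the projective point with homogeneous coordinates `v`, generated by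
the `2 × 2` minors of the matrix with rows `v` and the variables. -/
noncomputable def pointIdeal (v : σ → K) : Ideal (MvPolynomial σ K) :=
  Ideal.span (Set.range fun ij : σ × σ => C (v ij.1) * X ij.2 - C (v ij.2) * X ij.1)

lemma minor_mem_pointIdeal (v : σ → K) (i j : σ) :
    C (v i) * X j - C (v j) * X i ∈ pointIdeal v :=
  Ideal.subset_span ⟨(i, j), rfl⟩

lemma isHomogeneous_minor (v : σ → K) (i j : σ) :
    (C (v i) * X j - C (v j) * X i).IsHomogeneous 1 :=
  (isHomogeneous_C_mul_X _ _).sub (isHomogeneous_C_mul_X _ _)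

lemma eval_eq_zero_of_mem_pointIdeal {v : σ → K} {F : MvPolynomial σ K} (hF : F ∈ pointIdeal v) :
    eval v F = 0 := by
  suffices h : pointIdeal v ≤ RingHom.ker (eval v) from h hF
  rw [pointIdeal, Ideal.span_le]
  rintro _ ⟨ij, rfl⟩
  simp [mul_comm]

-- Modulo the minors, scaling the generic point by `v i` turns it into `X i` times `v`.
lemma mem_pointIdeal_of_isHomogeneous {v : σ → K} (hv : v ≠ 0) {F : MvPolynomial σ K} {n : ℕ}
    (hF : F.IsHomogeneous n) (h0 : eval v F = 0) : F ∈ pointIdeal v := by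
  obtain ⟨i, hi⟩ := Function.ne_iff.1 hv
  set S := MvPolynomial σ K ⧸ pointIdeal v
  set q := Ideal.Quotient.mkₐ K (pointIdeal v)
  have generic_point : (fun j => algebraMap K S (v i) * q (X j)) =
      fun j => q (X i) * algebraMap K S (v j) := by
    funext j
    rw [← q.commutes, ← q.commutes, ← map_mul, ← map_mul, mul_comm (X i)]
    exact Ideal.Quotient.eq.2 (minor_mem_pointIdeal v i j)
  have aeval_v : aeval (fun j => algebraMap K S (v j)) F = 0 :=
    (aeval_algebraMap_apply S v F).trans (by rw [aeval_eq_eval, h0, map_zero])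
  have q_eq_zero : algebraMap K S (v i) ^ n * q F = 0 := by
    calc algebraMap K S (v i) ^ n * q F
        = algebraMap K S (v i) ^ n * aeval (fun j => q (X j)) F :=
          congrArg _ (DFunLike.congr_fun (aeval_unique q) F)
      _ = q (X i) ^ n * aeval (fun j => algebraMap K S (v j)) F := by
          rw [← aeval_mul_of_isHomogeneous hF, generic_point, aeval_mul_of_isHomogeneous hF]
      _ = 0 := by rw [aeval_v, mul_zero]
  have isUnit_v : IsUnit (algebraMap K S (v i) ^ n) :=
    ((IsUnit.mk0 (v i) hi).map (algebraMap K S)).pow n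
  exact Ideal.Quotient.eq_zero_iff_mem.1 (isUnit_v.mul_right_eq_zero.1 q_eq_zero)

lemma mem_pointIdeal_iff {v : σ → K} (hv : v ≠ 0) (F : MvPolynomial σ K) :
    F ∈ pointIdeal v ↔ ∀ n, eval v (homogeneousComponent n F) = 0 := by
  let := gradedAlgebra (σ := σ) (R := K)
  have pointIdeal_isHomogeneous : (pointIdeal v).IsHomogeneous (homogeneousSubmodule σ K) := by
    refine Ideal.homogeneous_span _ _ ?_
    rintro _ ⟨ij, rfl⟩
    exact ⟨1, isHomogeneous_minor v ij.1 ij.2⟩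
  rw [mem_iff_homogeneousComponent_mem pointIdeal_isHomogeneous]
  exact forall_congr' fun n => ⟨eval_eq_zero_of_mem_pointIdeal,
    mem_pointIdeal_of_isHomogeneous hv (homogeneousComponent_isHomogeneous n F)⟩

/-- The ideal of the uniform fat point scheme of multiplicity `m` supported at the points `p i`. -/
noncomputable def fatPointIdeal {ι : Type*} (p : ι → σ → K) (m : ℕ) : Ideal (MvPolynomial σ K) :=
  ⨅ i, pointIdeal (p i) ^ m

end Points

section LinearChangeOfCoordinates

variable {σ K : Type*} [Fintype σ] [DecidableEq σ] [Field K]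

/-- The automorphism of the polynomial ring induced by a linear automorphism of affine space:
as a polynomial function, `linearSubst e F` is `F ∘ e`. -/
noncomputable def linearSubst (e : (σ → K) ≃ₗ[K] (σ → K)) :
    MvPolynomial σ K ≃ₐ[K] MvPolynomial σ K :=
  AlgEquiv.ofAlgHom (bind₁ (LinearMap.toMatrix' e.toLinearMap).toMvPolynomial)
    (bind₁ (LinearMap.toMatrix' e.symm.toLinearMap).toMvPolynomial)
    (by
      ext i
      simp [← Matrix.toMvPolynomial_mul, ← LinearMap.toMatrix'_comp])
    (by
      ext i
      simp [← Matrix.toMvPolynomial_mul, ← LinearMap.toMatrix'_comp])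

lemma linearSubst_symm_apply_linearSubst (e : (σ → K) ≃ₗ[K] (σ → K)) (F : MvPolynomial σ K) :
    linearSubst e.symm (linearSubst e F) = F :=
  (linearSubst e).symm_apply_apply F

lemma eval_linearSubst (e : (σ → K) ≃ₗ[K] (σ → K)) (v : σ → K) (F : MvPolynomial σ K) :
    eval v (linearSubst e F) = eval (e v) F := by
  refine (eval₂Hom_bind₁ _ _ _ F).trans ?_
  congr 2
  funext i
  exact (Matrix.toMvPolynomial_eval_eq_apply _ i v).trans (by simp)

lemma isHomogeneous_linearSubst (e : (σ → K) ≃ₗ[K] (σ → K)) {n : ℕ} {F : MvPolynomial σ K}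
    (hF : F.IsHomogeneous n) : (linearSubst e F).IsHomogeneous n := by
  rw [← one_mul n]
  exact hF.aeval _ (Matrix.toMvPolynomial_isHomogeneous (LinearMap.toMatrix' e.toLinearMap))

lemma isHomogeneous_linearSubst_iff (e : (σ → K) ≃ₗ[K] (σ → K)) (n : ℕ) (F : MvPolynomial σ K) :
    (linearSubst e F).IsHomogeneous n ↔ F.IsHomogeneous n :=
  ⟨fun h => linearSubst_symm_apply_linearSubst e F ▸ isHomogeneous_linearSubst e.symm h,
    isHomogeneous_linearSubst e⟩

lemma map_linearSubst_pointIdeal_le (e : (σ → K) ≃ₗ[K] (σ → K)) {v : σ → K} (hv : v ≠ 0) :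
    (pointIdeal (e v)).map (linearSubst e) ≤ pointIdeal v := by
  rw [pointIdeal, Ideal.map_span, Ideal.span_le]
  rintro _ ⟨_, ⟨ij, rfl⟩, rfl⟩
  refine mem_pointIdeal_of_isHomogeneous hv
    (isHomogeneous_linearSubst e (isHomogeneous_minor (e v) ij.1 ij.2)) ?_
  rw [eval_linearSubst]
  exact eval_eq_zero_of_mem_pointIdeal (minor_mem_pointIdeal (e v) ij.1 ij.2)

lemma map_linearSubst_pointIdeal (e : (σ → K) ≃ₗ[K] (σ → K)) {v : σ → K} (hv : v ≠ 0) :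
    (pointIdeal (e v)).map (linearSubst e) = pointIdeal v := by
  refine (map_linearSubst_pointIdeal_le e hv).antisymm fun F hF => ?_
  have hF' : linearSubst e.symm F ∈ pointIdeal (e v) := by
    refine map_linearSubst_pointIdeal_le e.symm (e.map_ne_zero_iff.2 hv) ?_
    rw [e.symm_apply_apply]
    exact Ideal.mem_map_of_mem _ hF
  rw [← linearSubst_symm_apply_linearSubst e.symm F]
  exact Ideal.mem_map_of_mem _ hF'

lemma map_linearSubst_fatPointIdeal (e : (σ → K) ≃ₗ[K] (σ → K)) {ι : Type*} {p : ι → σ → K}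
    (hp : ∀ i, p i ≠ 0) (m : ℕ) :
    (fatPointIdeal (fun i => e (p i)) m).map (linearSubst e) = fatPointIdeal p m := by
  have map_eq_comap (I : Ideal (MvPolynomial σ K)) :
      I.map (linearSubst e) = I.comap (linearSubst e).symm :=
    (Ideal.comap_symm (linearSubst e).toRingEquiv).symm
  rw [fatPointIdeal, map_eq_comap, Ideal.comap_iInf]
  simp_rw [← map_eq_comap, Ideal.map_pow, map_linearSubst_pointIdeal e (hp _)]
  rfl

end LinearChangeOfCoordinates

lemma vnum_fatPointIdeal_linearEquiv {K : Type*} [Field K] (e : (Fin 3 → K) ≃ₗ[K] (Fin 3 → K))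
    {ι : Type*} {p : ι → Fin 3 → K} (hp : ∀ i, p i ≠ 0) (m d : ℕ) :
    vnum (fatPointIdeal (fun i => e (p i)) m) d = vnum (fatPointIdeal p m) d := by
  rw [← map_linearSubst_fatPointIdeal e hp, vnum_map _ (isHomogeneous_linearSubst_iff e)]

section CanonicalPosition

variable {K : Type*} [Field K]

/-- The linear form in two variables that vanishes at the point of the projective line with
homogeneous coordinates `v`. -/
noncomputable def lineForm (v : Fin 2 → K) : MvPolynomial (Fin 2) K :=
  C (v 0) * X 1 - C (v 1) * X 0

lemma lineForm_isHomogeneous (v : Fin 2 → K) : (lineForm v).IsHomogeneous 1 :=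
  isHomogeneous_minor v 0 1

lemma lineForm_ne_zero {v : Fin 2 → K} (hv : v ≠ 0) : lineForm v ≠ 0 := by
  intro h
  have eval_eq_zero (w : Fin 2 → K) : v 0 * w 1 - v 1 * w 0 = 0 := by
    simpa [lineForm] using congrArg (eval w) h
  have h0 : v 0 = 0 := by simpa using eval_eq_zero ![0, 1]
  have h1 : v 1 = 0 := by simpa using eval_eq_zero ![1, 0]
  exact hv (funext (Fin.forall_fin_two.2 ⟨h0, h1⟩))

lemma lineForm_dvd_minor (v : Fin 2 → K) (i j : Fin 2) :
    lineForm v ∣ C (v i) * X j - C (v j) * X i := by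
  fin_cases i <;> fin_cases j
  · simp
  · exact dvd_rfl
  · exact (dvd_neg.2 dvd_rfl).trans (neg_sub _ _).dvd
  · simp

lemma isRelPrime_lineForm {v w : Fin 2 → K} (h : LinearIndependent K ![v, w]) :
    IsRelPrime (lineForm v) (lineForm w) := by
  intro d hdv hdw
  have isUnit_det : IsUnit (C (v 0 * w 1 - v 1 * w 0) : MvPolynomial (Fin 2) K) := by
    have := (Matrix.linearIndependent_rows_iff_isUnit (A := Matrix.of ![v, w])).1 h
    rw [Matrix.isUnit_iff_isUnit_det, Matrix.det_fin_two] at this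
    exact this.map C
  have hd0 : d ∣ X 0 := by
    rw [← isUnit_det.dvd_mul_left]
    convert dvd_sub (hdv.mul_left (C (w 0))) (hdw.mul_left (C (v 0))) using 1
    simp only [lineForm, C_sub, C_mul]
    ring
  have hd1 : d ∣ X 1 := by
    rw [← isUnit_det.dvd_mul_left]
    convert dvd_sub (hdv.mul_left (C (w 1))) (hdw.mul_left (C (v 1))) using 1
    simp only [lineForm, C_sub, C_mul]
    ring
  exact X_prime.irreducible.isRelPrime_iff_not_dvd.2 (by rw [X_dvd_X]; decide) hd0 hd1

lemma pointIdeal_cons_zero {v : Fin 2 → K} (hv : v ≠ 0) :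
    pointIdeal (Fin.cons 0 v : Fin 3 → K) = Ideal.span {X 0, rename Fin.succ (lineForm v)} := by
  have cons_ne_zero : (Fin.cons 0 v : Fin 3 → K) ≠ 0 := fun h =>
    hv (funext fun i => congrFun h i.succ)
  have X_zero_mem : X 0 ∈ Ideal.span {X 0, rename Fin.succ (lineForm v)} :=
    Ideal.subset_span (.inl rfl)
  refine le_antisymm (Ideal.span_le.2 ?_) (Ideal.span_le.2 ?_)
  · rintro _ ⟨⟨i, j⟩, rfl⟩
    cases i using Fin.cases with
    | zero =>
      cases j using Fin.cases <;> simp [Ideal.mul_mem_left _ _ X_zero_mem]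
    | succ i =>
      cases j using Fin.cases with
      | zero => simp [Ideal.mul_mem_left _ _ X_zero_mem]
      | succ j =>
        have := map_dvd (rename Fin.succ) (lineForm_dvd_minor v i j)
        simpa using Ideal.mem_of_dvd _ this (Ideal.subset_span (.inr rfl))
  · rintro _ (rfl | rfl)
    · exact mem_pointIdeal_of_isHomogeneous cons_ne_zero (isHomogeneous_X K 0) (by simp)
    · refine mem_pointIdeal_of_isHomogeneous cons_ne_zero
        (lineForm_isHomogeneous v).rename_isHomogeneous ?_
      rw [eval_rename]
      simp [Function.comp_def, lineForm, mul_comm]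

lemma pointIdeal_cons_one_zero (n : ℕ) :
    pointIdeal (Fin.cons 1 0 : Fin (n + 1) → K) =
      (idealOfVars (Fin n) K).map (rename Fin.succ) := by
  have X_succ_mem (i : Fin n) : X i.succ ∈ (idealOfVars (Fin n) K).map (rename Fin.succ) :=
    rename_X (R := K) Fin.succ i ▸ Ideal.mem_map_of_mem _ (Ideal.subset_span ⟨i, rfl⟩)
  refine le_antisymm (Ideal.span_le.2 ?_) ?_
  · rintro _ ⟨⟨i, j⟩, rfl⟩
    cases i using Fin.cases <;> cases j using Fin.cases <;> simp [X_succ_mem]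
  · rw [idealOfVars, Ideal.map_span, Ideal.span_le]
    rintro _ ⟨_, ⟨i, rfl⟩, rfl⟩
    simpa using minor_mem_pointIdeal (Fin.cons 1 0 : Fin (n + 1) → K) 0 i.succ

lemma fatPointIdeal_eq_linePointIdeal {l : ℕ} {v : Fin l → Fin 2 → K} (hv0 : ∀ i, v i ≠ 0)
    (hv : Pairwise fun i j => LinearIndependent K ![v i, v j]) {p : Fin (l + 1) → Fin 3 → K}
    (hp : ∀ i, p i.castSucc = Fin.cons 0 (v i)) (hlast : p (Fin.last l) = Fin.cons 1 0) (m : ℕ) :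
    fatPointIdeal p m = linePointIdeal (∏ i, lineForm (v i)) m := by
  have prod_pow_dvd_iff (j : ℕ) (G : MvPolynomial (Fin 2) K) :
      (∏ i, lineForm (v i)) ^ j ∣ G ↔ ∀ i, lineForm (v i) ^ j ∣ G := by
    rw [← Finset.prod_pow]
    refine ⟨fun h i => (Finset.dvd_prod_of_mem _ (Finset.mem_univ i)).trans h, ?_⟩
    exact Fintype.prod_dvd_of_isRelPrime fun i i' hi => (isRelPrime_lineForm (hv hi)).pow
  ext F
  rw [fatPointIdeal, Ideal.mem_iInf, Fin.forall_fin_succ', linePointIdeal, Ideal.mem_inf, hlast,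
    pointIdeal_cons_one_zero, mem_span_X_zero_rename_pow_iff]
  simp_rw [hp, pointIdeal_cons_zero (hv0 _), mem_span_X_zero_rename_pow_iff, prod_pow_dvd_iff]
  rw [forall_comm]

end CanonicalPosition

section Coordinates

variable {K : Type*} [Field K]

lemma exists_linearEquiv_apply_eq_cons {n : ℕ} (f : Module.Dual K (Fin (n + 1) → K))
    {w : Fin (n + 1) → K} (hw : f w ≠ 0) :
    ∃ e : (Fin (n + 1) → K) ≃ₗ[K] (Fin (n + 1) → K),
      e w = Fin.cons 1 0 ∧ ∀ v, f v = 0 → e v 0 = 0 := by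
  have hf : f ≠ 0 := fun h => hw (by rw [h, LinearMap.zero_apply])
  have finrank_ker : Module.finrank K f.ker = n := by
    have := Module.Dual.finrank_ker_add_one_of_ne_zero hf
    rw [Module.finrank_fin_fun] at this
    omega
  obtain ⟨b, b_zero, f_b_succ⟩ : ∃ b : Module.Basis (Fin (n + 1)) K (Fin (n + 1) → K),
      b 0 = w ∧ ∀ i : Fin n, f (b i.succ) = 0 :=
    ⟨Module.Basis.mkFinCons w (Module.finBasisOfFinrankEq K f.ker finrank_ker)
      (fun c x hx h => by simpa [LinearMap.mem_ker.1 hx, hw] using congrArg f h)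
      (fun z => ⟨-(f z / f w), by simp [hw]⟩), by simp, fun i => by simp⟩
  have f_b_zero : f (b 0) = f w := by rw [b_zero]
  have coord_zero : b.coord 0 = (f w)⁻¹ • f := by
    refine b.ext fun i => ?_
    cases i using Fin.cases with
    | zero => simp [f_b_zero, hw]
    | succ i => simp [f_b_succ]
  refine ⟨b.equivFun, funext fun i => ?_, fun v hv => ?_⟩
  · rw [← b_zero, b.equivFun_self]
    cases i using Fin.cases <;> simp [(Fin.succ_ne_zero _).symm]
  · simpa [hv] using LinearMap.congr_fun coord_zero v

end Coordinates

section PointsOnALine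

variable {K : Type*} [Field K]

lemma exists_vnum_fatPointIdeal_eq_vnum_linePointIdeal {l : ℕ} {p : Fin (l + 1) → Fin 3 → K}
    (hp0 : ∀ i, p i ≠ 0) (hdist : ∀ i j, i ≠ j → ∀ c : K, c • p i ≠ p j)
    (f : Module.Dual K (Fin 3 → K)) (hon : ∀ i : Fin l, f (p i.castSucc) = 0)
    (hoff : f (p (Fin.last l)) ≠ 0) :
    ∃ V : MvPolynomial (Fin 2) K, V.IsHomogeneous l ∧ V ≠ 0 ∧
      ∀ m d, vnum (fatPointIdeal p m) d = vnum (linePointIdeal V m) d := by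
  obtain ⟨e, e_last, e_zero⟩ := exists_linearEquiv_apply_eq_cons f hoff
  let v (i : Fin l) : Fin 2 → K := Fin.tail (e (p i.castSucc))
  have e_castSucc (i : Fin l) : e (p i.castSucc) = Fin.cons 0 (v i) := by
    rw [← e_zero _ (hon i), Fin.cons_self_tail]
  have v_ne_zero (i : Fin l) : v i ≠ 0 := by
    intro h
    refine hp0 i.castSucc (e.map_eq_zero_iff.1 ?_)
    rw [e_castSucc, h]
    exact Matrix.cons_zero_zero
  have v_linearIndependent : Pairwise fun i j => LinearIndependent K ![v i, v j] := by
    intro i j hij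
    refine (LinearIndependent.pair_iff' (v_ne_zero i)).2 fun c h => ?_
    refine hdist _ _ ((Fin.castSucc_injective l).ne hij) c (e.injective ?_)
    rw [map_smul, e_castSucc, e_castSucc, ← h]
    exact (Matrix.smul_cons c 0 (v i)).trans (by rw [smul_zero]; rfl)
  refine ⟨∏ i, lineForm (v i), ?_, ?_, fun m d => ?_⟩
  · simpa using IsHomogeneous.prod Finset.univ (fun i => lineForm (v i)) (fun _ => 1)
      fun i _ => lineForm_isHomogeneous (v i)
  · exact Finset.prod_ne_zero_iff.2 fun i _ => lineForm_ne_zero (v_ne_zero i)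
  · rw [← vnum_fatPointIdeal_linearEquiv e hp0,
      fatPointIdeal_eq_linePointIdeal v_ne_zero v_linearIndependent e_castSucc e_last]

end PointsOnALine

lemma tendsto_sSup_div_of_isGreatest {S : ℕ → Set ℕ} {l : ℕ}
    (hS : ∀ m, 1 ≤ m → IsGreatest (S m) (l * m)) :
    Tendsto (fun m : ℕ => ((sSup (S m) : ℕ) : ℝ) / m) atTop (nhds (l : ℝ)) := by
  refine tendsto_const_nhds.congr' ((eventually_ge_atTop 1).mono fun m hm => ?_)
  have hm0 : (m : ℝ) ≠ 0 := Nat.cast_ne_zero.2 (by omega)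
  simp only [(hS m hm).csSup_eq, Nat.cast_mul, mul_div_cancel_right₀ _ hm0]

theorem stmt_11_general {K : Type*} [Field K] {l : ℕ} (hl : 2 < l)
    {p : Fin (l + 1) → Fin 3 → K} (hp0 : ∀ i, p i ≠ 0)
    (hdist : ∀ i j, i ≠ j → ∀ c : K, c • p i ≠ p j)
    {L : Fin 3 → K} (hon : ∀ i : Fin (l + 1), (i : ℕ) < l → ∑ j, L j * p i j = 0)
    (hoff : ∑ j, L j * p (Fin.last l) j ≠ 0)
    {P : Fin (l + 1) → Ideal (MvPolynomial (Fin 3) K)}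
    (hP : ∀ i F, F ∈ P i ↔ ∀ n, eval (p i) (homogeneousComponent n F) = 0)
    {Jm : ℕ → Ideal (MvPolynomial (Fin 3) K)} (hJm : ∀ m, Jm m = ⨅ i, P i ^ m) :
    (∀ m, 1 ≤ m → vnum (Jm m) (l * m) = 1 ∧ ∀ d, l * m < d → vnum (Jm m) d = 0) ∧
    Tendsto (fun m : ℕ => ((sSup {d : ℕ | vnum (Jm m) d ≠ 0} : ℕ) : ℝ) / m) atTop
      (nhds (l : ℝ)) := by
  have Jm_eq (m : ℕ) : Jm m = fatPointIdeal p m := by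
    have P_eq (i) : P i = pointIdeal (p i) :=
      Ideal.ext fun F => (hP i F).trans (mem_pointIdeal_iff (hp0 i) F).symm
    simp only [hJm, P_eq, fatPointIdeal]
  obtain ⟨V, V_homogeneous, V_ne_zero, vnum_eq⟩ :=
    exists_vnum_fatPointIdeal_eq_vnum_linePointIdeal hp0 hdist (dotProductBilin K K L)
      (fun i => hon i.castSucc i.isLt) hoff
  have vnum_top (m : ℕ) (hm : 1 ≤ m) : vnum (Jm m) (l * m) = 1 := by
    rw [Jm_eq, vnum_eq, vnum_linePointIdeal_mul V_homogeneous V_ne_zero hl hm]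
  have vnum_above (m d : ℕ) (hd : l * m < d) : vnum (Jm m) d = 0 := by
    rw [Jm_eq, vnum_eq, vnum_linePointIdeal_of_lt V_homogeneous hl hd]
  refine ⟨fun m hm => ⟨vnum_top m hm, vnum_above m⟩, tendsto_sSup_div_of_isGreatest fun m hm => ?_⟩
  exact ⟨by simp [vnum_top m hm], fun d hd => le_of_not_gt fun h => hd (vnum_above m d h)⟩

theorem stmt_11
    (K : Type*) [Field K] [CharZero K]
    -- `l > 2` points on a line plus one point off the line
    (l : ℕ) (hl : 2 < l)
    (p : Fin (l + 1) → Fin 3 → K) (hp0 : ∀ i, p i ≠ 0)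
    (hdist : ∀ i j, i ≠ j → ∀ c : K, c • p i ≠ p j)
    (L : Fin 3 → K) (hL : L ≠ 0)
    (hon : ∀ i : Fin (l + 1), (i : ℕ) < l → ∑ j, L j * p i j = 0)
    (hoff : ∑ j, L j * p (Fin.last l) j ≠ 0)
    -- `P i` is the homogeneous prime ideal of all forms vanishing at `p i`
    (P : Fin (l + 1) → Ideal (MvPolynomial (Fin 3) K))
    (hP : ∀ i F, F ∈ P i ↔ ∀ n, eval (p i) (homogeneousComponent n F) = 0)
    -- `Jm m = I^{(m)} = P_1^m ∩ ⋯ ∩ P_{l+1}^m`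
    (Jm : ℕ → Ideal (MvPolynomial (Fin 3) K)) (hJm : ∀ m, Jm m = ⨅ i, P i ^ m)
    -- `m ≥ 1` divisible by `l(l−1)`
    (m : ℕ) (hm : 1 ≤ m) (hdvd : l * (l - 1) ∣ m) :
    -- the largest degree of a minimal generator of `I^{(m)}` is `lm`
    vnum (Jm m) (l * m) = 1 ∧
    (∀ d : ℕ, l * m < d → vnum (Jm m) d = 0) ∧
    -- along `m = ρ·l·(l−1)`, (largest degree of a minimal generator of `I^{(m)}`)/m → l
    Tendsto
      (fun ρ : ℕ => ((sSup {d : ℕ | vnum (Jm (ρ * l * (l - 1))) d ≠ 0} : ℕ) : ℝ) / (ρ * l * (l - 1)))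
      atTop (nhds (l : ℝ)) := by
  obtain ⟨hgen, hlim⟩ := stmt_11_general hl hp0 hdist hon hoff hP hJm
  refine ⟨(hgen m hm).1, (hgen m hm).2, ?_⟩
  have tendsto_multiples : Tendsto (fun ρ : ℕ => ρ * l * (l - 1)) atTop atTop :=
    (tendsto_id.atTop_mul_const' (by omega)).atTop_mul_const' (by omega)
  simpa [Function.comp_def, Nat.cast_sub (by omega : 1 ≤ l)] using hlim.comp tendsto_multiples
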